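/- (Composition of ε-divergence bounds under bind.) Let A, B be countable sets, ε1, ε2 ≥ 0, μ1, μ2 probability distributions on A with Δ_{ε1}(μ1, μ2) ≤ 0, and f1, f2 : A → Δ(B) kernels such that Δ_{ε2}(f1(a), f2(a)) ≤ 0 for every a ∈ A. Then Δ_{ε1+ε2}(bind μ1 f1, bind μ2 f2) ≤ 0. -/

import Mathlib

open scoped BigOperators

noncomputable section

/-- Mass that a (sub)distribution assigns to a set of outcomes. -/
def mass {A : Type*} (μ : A → ℝ) (E : Set A) : ℝ := ∑' a : E, μ a

/-- The ε-divergence `Δ_ε(μ1, μ2) = sup_{E ⊆ A} (μ1(E) − exp(ε)·μ2(E))`. -/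
def eDiv {A : Type*} (ε : ℝ) (μ1 μ2 : A → ℝ) : ℝ :=
  ⨆ E : Set A, (mass μ1 E - Real.exp ε * mass μ2 E)

/-- `μ` is a probability distribution: pointwise nonnegative with total mass 1. -/
def IsProb {A : Type*} (μ : A → ℝ) : Prop :=
  (∀ a, 0 ≤ μ a) ∧ (∑' a, μ a) = 1

/-- `μ` is a subdistribution: pointwise nonnegative, summable, with total mass at most 1. -/
def IsSubProb {A : Type*} (μ : A → ℝ) : Prop :=
  (∀ a, 0 ≤ μ a) ∧ Summable μ ∧ (∑' a, μ a) ≤ 1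

/-- ε-approximate lifting `μ1 (Ψ)^ε μ2` of a relation `Ψ` between two
probability distributions. -/
def Lifting {A B : Type*} (ε : ℝ) (Ψ : A → B → Prop) (μ1 : A → ℝ) (μ2 : B → ℝ) : Prop :=
  ∃ μL μR : A × B → ℝ, IsProb μL ∧ IsProb μR ∧
    (∀ a, (∑' b, μL (a, b)) = μ1 a) ∧
    (∀ b, (∑' a, μR (a, b)) = μ2 b) ∧
    (∀ p : A × B, (0 < μL p ∨ 0 < μR p) → Ψ p.1 p.2) ∧
    eDiv ε μL μR ≤ 0

/-- `A` is ε-differentially private w.r.t. the adjacency relation `adj`. -/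
def DP {D O : Type*} (ε : ℝ) (adj : D → D → Prop) (A : D → O → ℝ) : Prop :=
  ∀ d1 d2, adj d1 d2 → ∀ o, A d1 o ≤ Real.exp ε * A d2 o

/-- Monadic bind of distributions: `(bind μ f)(b) = Σ_a μ(a)·f(a)(b)`. -/
def pbind {A B : Type*} (μ : A → ℝ) (f : A → B → ℝ) : B → ℝ :=
  fun b => ∑' a, μ a * f a b

/-- Dirac (point-mass) distribution at `a`. -/
def punit {A : Type*} [DecidableEq A] (a : A) : A → ℝ :=
  fun x => if x = a then 1 else 0

/-- Pushforward of a distribution along `g`: `(map g μ)(b) = Σ_{a : g(a)=b} μ(a)`. -/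
def pmap {A B : Type*} (g : A → B) (μ : A → ℝ) : B → ℝ :=
  fun b => ∑' a : {a // g a = b}, μ (a : A)

/-- Discrete Laplace distribution with mean `v` and (inverse scale) parameter `ε`:
`dLap(v, ε)(z) = ((exp ε − 1)/(exp ε + 1))·exp(−ε·|z − v|)`. -/
def dLap (v : ℤ) (ε : ℝ) : ℤ → ℝ :=
  fun z => ((Real.exp ε - 1) / (Real.exp ε + 1)) * Real.exp (-ε * ((|z - v| : ℤ) : ℝ))

end

theorem IsProb.summable_aux {A : Type*} {μ : A → ℝ} (h : IsProb μ) : Summable μ := by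
  by_contra hc
  have := h.2
  rw [tsum_eq_zero_of_not_summable hc] at this
  exact zero_ne_one this

theorem eDiv_pointwise_aux {A : Type*} {ε : ℝ} {μ1 μ2 : A → ℝ} (h1 : IsProb μ1)
    (h2 : IsProb μ2) (h : eDiv ε μ1 μ2 ≤ 0) (a : A) : μ1 a ≤ Real.exp ε * μ2 a := by
  have hb : BddAbove (Set.range fun E : Set A => mass μ1 E - Real.exp ε * mass μ2 E) := by
    refine ⟨1, ?_⟩
    rintro _ ⟨E, rfl⟩
    have e1 : mass μ1 E ≤ 1 := by
      rw [← h1.2]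
      exact h1.summable_aux.tsum_subtype_le μ1 E h1.1
    have e2 : 0 ≤ mass μ2 E := tsum_nonneg fun b => h2.1 b
    have := mul_nonneg (Real.exp_pos ε).le e2
    simp only
    linarith
  have h3 := (le_ciSup hb {a}).trans h
  simp only [mass, tsum_singleton] at h3
  linarith

theorem bind_summable_aux {A B : Type*} {μ : A → ℝ} {f : A → B → ℝ} (h : IsProb μ)
    (hf : ∀ a, IsProb (f a)) : Summable (fun p : A × B => μ p.1 * f p.1 p.2) := by
  have hn : 0 ≤ (fun p : A × B => μ p.1 * f p.1 p.2) :=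
    fun p => mul_nonneg (h.1 p.1) ((hf p.1).1 p.2)
  refine (summable_prod_of_nonneg hn).2 ⟨fun a => ?_, ?_⟩
  · exact Summable.mul_left (μ a) (hf a).summable_aux
  · have e : (fun a => ∑' b, μ a * f a b) = μ := by
      funext a
      rw [tsum_mul_left, (hf a).2, mul_one]
    change Summable (fun a => ∑' b, μ a * f a b)
    rw [e]
    exact h.summable_aux

/-- Composition of ε-divergence bounds under monadic bind. -/
theorem eDiv_bind_compose {A B : Type*} [Countable A] [Countable B]
    (ε1 ε2 : ℝ) (hε1 : 0 ≤ ε1) (hε2 : 0 ≤ ε2)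
    (μ1 μ2 : A → ℝ) (h1 : IsProb μ1) (h2 : IsProb μ2)
    (f1 f2 : A → B → ℝ) (hf1 : ∀ a, IsProb (f1 a)) (hf2 : ∀ a, IsProb (f2 a))
    (hμ : eDiv ε1 μ1 μ2 ≤ 0) (hf : ∀ a : A, eDiv ε2 (f1 a) (f2 a) ≤ 0) :
    eDiv (ε1 + ε2) (pbind μ1 f1) (pbind μ2 f2) ≤ 0 := by 
  have s1 := bind_summable_aux h1 hf1
  have s2 := bind_summable_aux h2 hf2
  have p1 : Summable (pbind μ1 f1) := s1.prod_symm.prod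
  have p2 : Summable (pbind μ2 f2) := s2.prod_symm.prod
  have hp : ∀ b, pbind μ1 f1 b ≤ Real.exp (ε1 + ε2) * pbind μ2 f2 b := by
    intro b
    unfold pbind
    rw [← tsum_mul_left]
    refine Summable.tsum_le_tsum (fun a => ?_) (s1.prod_symm.prod_factor b)
      ((s2.prod_symm.prod_factor b).mul_left _)
    have e1 := eDiv_pointwise_aux h1 h2 hμ a
    have e2 := eDiv_pointwise_aux (hf1 a) (hf2 a) (hf a) b
    calc μ1 a * f1 a b ≤ (Real.exp ε1 * μ2 a) * (Real.exp ε2 * f2 a b) :=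
          mul_le_mul e1 e2 ((hf1 a).1 b) (mul_nonneg (Real.exp_pos _).le (h2.1 a))
      _ = Real.exp (ε1 + ε2) * (μ2 a * f2 a b) := by rw [Real.exp_add]; ring
  unfold eDiv
  refine Real.iSup_le (fun E => ?_) le_rfl
  unfold mass
  rw [← tsum_mul_left, sub_nonpos]
  exact Summable.tsum_le_tsum (fun b => hp b) (p1.subtype E) ((p2.subtype E).mul_left _)
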